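/- Assume good X, good Y, ↑good inp, ↑goodAbs binp, |dom inp| < |var| and |dom binp| < |var|. Then: (1) (Var xs x)[Y/y]_ys = Y if (xs,x) = (ys,y), and (Var xs x)[Y/y]_ys = Var xs x otherwise; (2) (Op δ inp binp)[Y/y]_ys = Op δ (↑(_[Y/y]_ys) inp) (↑(_[Y/y]_ys) binp); (3) if (xs,x) ≠ (ys,y) and fresh xs x Y, then (Abs xs x X)[Y/y]_ys = Abs xs x (X[Y/y]_ys). -/

import Mathlib

open scoped Classical

universe u

section Binding

variable (var varsort index bindex opsym : Type u)

/-! ### Inputs -/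

/-- An `(α,β)`-input: a partial function from `α` to `β`. -/
abbrev Input (α β : Type u) : Type u := α → Option β

/-- The domain of an input. -/
def idom {α β : Type u} (inp : Input α β) : Set α := {a | inp a ≠ none}

/-- The componentwise lifting of a predicate to inputs. -/
def liftP {α β : Type u} (P : β → Prop) (inp : Input α β) : Prop :=
  ∀ a b, inp a = some b → P b

/-- The componentwise lifting of a function to inputs. -/
def liftF {α β γ : Type u} (f : β → γ) (inp : Input α β) : Input α γ :=
  fun a => (inp a).map f

/-- An input is small if its domain has cardinality smaller than that of `var`. -/
def smallDom {α β : Type u} (inp : Input α β) : Prop :=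
  Cardinal.mk (idom inp) < Cardinal.mk var

/-! ### Quasiterms -/

mutual
/-- Quasiterms: raw terms before quotienting by alpha-equivalence. -/
inductive QTerm : Type u where
  | qVar : varsort → var → QTerm
  | qOp : opsym → (index → Option QTerm) → (bindex → Option QAbs) → QTerm
/-- Quasiabstractions. -/
inductive QAbs : Type u where
  | qAbs : varsort → var → QTerm → QAbs
end

/-- Transposition of two variables. -/
noncomputable def swapVar (z1 z2 x : var) : var :=
  if x = z1 then z2 else if x = z2 then z1 else x

/-- Sort-aware transposition of variables (acts only on variables of varsort `zs`). -/
noncomputable def swapVarS (zs xs : varsort) (z1 z2 x : var) : var :=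
  if xs = zs then swapVar var z1 z2 x else x

variable {var varsort index bindex opsym}

/-- Swapping of the variables `z1`, `z2` at varsort `zs` in a quasiterm
(transposing them everywhere, including binding positions). -/
noncomputable def qSwap (z1 z2 : var) (zs : varsort) :
    QTerm var varsort index bindex opsym → QTerm var varsort index bindex opsym :=
  QTerm.rec (motive_1 := fun _ => QTerm var varsort index bindex opsym)
    (motive_2 := fun _ => QAbs var varsort index bindex opsym)
    (motive_3 := fun _ => Option (QTerm var varsort index bindex opsym))
    (motive_4 := fun _ => Option (QAbs var varsort index bindex opsym))
    (fun xs x => .qVar xs (swapVarS var varsort zs xs z1 z2 x))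
    (fun d _ _ rinp rbinp => .qOp d rinp rbinp)
    (fun xs x _ rX => .qAbs xs (swapVarS var varsort zs xs z1 z2 x) rX)
    none (fun _ r => some r) none (fun _ r => some r)

/-- Swapping of variables in a quasiabstraction. -/
noncomputable def qSwapAbs (z1 z2 : var) (zs : varsort) :
    QAbs var varsort index bindex opsym → QAbs var varsort index bindex opsym
  | .qAbs xs x X => .qAbs xs (swapVarS var varsort zs xs z1 z2 x) (qSwap z1 z2 zs X)

/-! ### Freshness and goodness -/

mutual
/-- `QFresh ys y X`: the variable `y` of varsort `ys` has no free occurrence in `X`. -/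
inductive QFresh : varsort → var → QTerm var varsort index bindex opsym → Prop where
  | qVar : ∀ {ys y xs x}, (ys, y) ≠ (xs, x) → QFresh ys y (.qVar xs x)
  | qOp : ∀ {ys y d inp binp}, (∀ i X, inp i = some X → QFresh ys y X) →
      (∀ j A, binp j = some A → QFreshAbs ys y A) → QFresh ys y (.qOp d inp binp)
/-- Freshness for quasiabstractions. -/
inductive QFreshAbs : varsort → var → QAbs var varsort index bindex opsym → Prop where
  | qAbs_bound : ∀ {xs x X}, QFreshAbs xs x (.qAbs xs x X)
  | qAbs_body : ∀ {ys y xs x X}, QFresh ys y X → QFreshAbs ys y (.qAbs xs x X)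
end

mutual
/-- Good quasiterms: all constructors branch less than `|var|`. -/
inductive QGood : QTerm var varsort index bindex opsym → Prop where
  | qVar : ∀ {xs x}, QGood (.qVar xs x)
  | qOp : ∀ {d inp binp}, (∀ i X, inp i = some X → QGood X) →
      (∀ j A, binp j = some A → QGoodAbs A) →
      smallDom var inp → smallDom var binp → QGood (.qOp d inp binp)
/-- Good quasiabstractions. -/
inductive QGoodAbs : QAbs var varsort index bindex opsym → Prop where
  | qAbs : ∀ {xs x X}, QGood X → QGoodAbs (.qAbs xs x X)
end

/-! ### Alpha-equivalence -/

mutual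
/-- Alpha-equivalence of quasiterms. -/
inductive Alpha : QTerm var varsort index bindex opsym →
    QTerm var varsort index bindex opsym → Prop where
  | qVar : ∀ {xs x}, Alpha (.qVar xs x) (.qVar xs x)
  | qOp : ∀ {d inp binp inp' binp'},
      (∀ i, inp i = none ↔ inp' i = none) →
      (∀ i X X', inp i = some X → inp' i = some X' → Alpha X X') →
      (∀ j, binp j = none ↔ binp' j = none) →
      (∀ j A A', binp j = some A → binp' j = some A' → AlphaAbs A A') →
      Alpha (.qOp d inp binp) (.qOp d inp' binp')
/-- Alpha-equivalence of quasiabstractions (the exists-fresh formulation). -/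
inductive AlphaAbs : QAbs var varsort index bindex opsym →
    QAbs var varsort index bindex opsym → Prop where
  | qAbs : ∀ {xs x x' X X' y}, y ∉ ({x, x'} : Set var) →
      QFresh xs y X → QFresh xs y X' →
      Alpha (qSwap y x xs X) (qSwap y x' xs X') →
      AlphaAbs (.qAbs xs x X) (.qAbs xs x' X')
end

/-! ### Terms and abstractions as quotients -/

variable (var varsort index bindex opsym)

/-- Terms: quasiterms modulo alpha-equivalence. -/
def Term : Type u := Quot (@Alpha var varsort index bindex opsym)

/-- Abstractions: quasiabstractions modulo alpha-equivalence. -/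
def Abstr : Type u := Quot (@AlphaAbs var varsort index bindex opsym)

variable {var varsort index bindex opsym}

/-- The projection from quasiterms to terms. -/
def tmk : QTerm var varsort index bindex opsym → Term var varsort index bindex opsym :=
  Quot.mk _

/-- The projection from quasiabstractions to abstractions. -/
def amk : QAbs var varsort index bindex opsym → Abstr var varsort index bindex opsym :=
  Quot.mk _

/-- A representative of a term. -/
noncomputable def trep (X : Term var varsort index bindex opsym) :
    QTerm var varsort index bindex opsym := Quot.out X

/-- A representative of an abstraction. -/
noncomputable def arep (A : Abstr var varsort index bindex opsym) :
    QAbs var varsort index bindex opsym := Quot.out A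

/-- Good terms. -/
def good (X : Term var varsort index bindex opsym) : Prop := QGood (trep X)

/-- Good abstractions. -/
def goodAbs (A : Abstr var varsort index bindex opsym) : Prop := QGoodAbs (arep A)

/-- The variable-injection constructor on terms. -/
def Var (xs : varsort) (x : var) : Term var varsort index bindex opsym :=
  tmk (.qVar xs x)

/-- The operation constructor on terms. -/
noncomputable def Op (d : opsym) (inp : Input index (Term var varsort index bindex opsym))
    (binp : Input bindex (Abstr var varsort index bindex opsym)) :
    Term var varsort index bindex opsym :=
  tmk (.qOp d (liftF trep inp) (liftF arep binp))

/-- The abstraction constructor. -/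
noncomputable def Abs (xs : varsort) (x : var) (X : Term var varsort index bindex opsym) :
    Abstr var varsort index bindex opsym :=
  amk (.qAbs xs x (trep X))

/-- Freshness on terms. -/
def fresh (ys : varsort) (y : var) (X : Term var varsort index bindex opsym) : Prop :=
  QFresh ys y (trep X)

/-- Freshness on abstractions. -/
def freshAbs (ys : varsort) (y : var) (A : Abstr var varsort index bindex opsym) : Prop :=
  QFreshAbs ys y (arep A)

/-- Swapping on terms. -/
noncomputable def tswap (X : Term var varsort index bindex opsym)
    (z1 z2 : var) (zs : varsort) : Term var varsort index bindex opsym :=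
  tmk (qSwap z1 z2 zs (trep X))

/-! ### Substitution -/

mutual
/-- The graph of capture-avoiding substitution on quasiterms:
`QSubst X Y y ys Z` means that `Z` is a result of substituting `Y` for the free
occurrences of the variable `y` of varsort `ys` in `X` (along a capture-free
representative). -/
inductive QSubst : QTerm var varsort index bindex opsym →
    QTerm var varsort index bindex opsym → var → varsort →
    QTerm var varsort index bindex opsym → Prop where
  | var_eq : ∀ {Y y ys}, QSubst (.qVar ys y) Y y ys Y
  | var_ne : ∀ {Y y ys xs x}, (xs, x) ≠ (ys, y) → QSubst (.qVar xs x) Y y ys (.qVar xs x)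
  | op : ∀ {Y y ys d inp binp inp' binp'},
      (∀ i, inp i = none ↔ inp' i = none) →
      (∀ i X X', inp i = some X → inp' i = some X' → QSubst X Y y ys X') →
      (∀ j, binp j = none ↔ binp' j = none) →
      (∀ j A A', binp j = some A → binp' j = some A' → QSubstAbs A Y y ys A') →
      QSubst (.qOp d inp binp) Y y ys (.qOp d inp' binp')
/-- The graph of capture-avoiding substitution on quasiabstractions. -/
inductive QSubstAbs : QAbs var varsort index bindex opsym →
    QTerm var varsort index bindex opsym → var → varsort →
    QAbs var varsort index bindex opsym → Prop where
  | abs : ∀ {Y y ys xs x X X'}, (xs, x) ≠ (ys, y) → QFresh xs x Y →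
      QSubst X Y y ys X' → QSubstAbs (.qAbs xs x X) Y y ys (.qAbs xs x X')
end

/-- The graph of capture-avoiding substitution on terms. -/
def SubstRel (X Y : Term var varsort index bindex opsym) (y : var) (ys : varsort)
    (Z : Term var varsort index bindex opsym) : Prop :=
  ∃ qX qZ, tmk qX = X ∧ tmk qZ = Z ∧ QSubst qX (trep Y) y ys qZ

/-- Capture-avoiding substitution on terms: `subst X Y y ys` is `X[Y/y]_ys`. -/
noncomputable def subst (X Y : Term var varsort index bindex opsym)
    (y : var) (ys : varsort) : Term var varsort index bindex opsym :=
  if h : ∃ Z, SubstRel X Y y ys Z then h.choose else X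

/-- The graph of capture-avoiding substitution on abstractions. -/
def SubstAbsRel (A : Abstr var varsort index bindex opsym)
    (Y : Term var varsort index bindex opsym) (y : var) (ys : varsort)
    (B : Abstr var varsort index bindex opsym) : Prop :=
  ∃ qA qB, amk qA = A ∧ amk qB = B ∧ QSubstAbs qA (trep Y) y ys qB

/-- Capture-avoiding substitution on abstractions: `substAbs A Y y ys` is `A[Y/y]_ys`. -/
noncomputable def substAbs (A : Abstr var varsort index bindex opsym)
    (Y : Term var varsort index bindex opsym) (y : var) (ys : varsort) :
    Abstr var varsort index bindex opsym :=
  if h : ∃ B, SubstAbsRel A Y y ys B then h.choose else A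

/-! ### Parallel substitution -/

mutual
/-- The graph of capture-avoiding parallel substitution on quasiterms, along an
assignment `ρ : varsort → var → Option qterm`. -/
inductive QPSubst : QTerm var varsort index bindex opsym →
    (varsort → var → Option (QTerm var varsort index bindex opsym)) →
    QTerm var varsort index bindex opsym → Prop where
  | var_some : ∀ {ρ xs x Y}, ρ xs x = some Y → QPSubst (.qVar xs x) ρ Y
  | var_none : ∀ {ρ xs x}, ρ xs x = none → QPSubst (.qVar xs x) ρ (.qVar xs x)
  | op : ∀ {ρ d inp binp inp' binp'},
      (∀ i, inp i = none ↔ inp' i = none) →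
      (∀ i X X', inp i = some X → inp' i = some X' → QPSubst X ρ X') →
      (∀ j, binp j = none ↔ binp' j = none) →
      (∀ j A A', binp j = some A → binp' j = some A' → QPSubstAbs A ρ A') →
      QPSubst (.qOp d inp binp) ρ (.qOp d inp' binp')
/-- The graph of capture-avoiding parallel substitution on quasiabstractions. -/
inductive QPSubstAbs : QAbs var varsort index bindex opsym →
    (varsort → var → Option (QTerm var varsort index bindex opsym)) →
    QAbs var varsort index bindex opsym → Prop where
  | abs : ∀ {ρ xs x X X'}, ρ xs x = none →
      (∀ ys y Y, ρ ys y = some Y → QFresh xs x Y) →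
      QPSubst X ρ X' → QPSubstAbs (.qAbs xs x X) ρ (.qAbs xs x X')
end

/-- Turning a term-valued assignment into a quasiterm-valued one, by picking
representatives. -/
noncomputable def qassign (ρ : varsort → var → Option (Term var varsort index bindex opsym)) :
    varsort → var → Option (QTerm var varsort index bindex opsym) :=
  fun xs x => (ρ xs x).map trep

/-- The graph of parallel substitution on terms. -/
def PSubstRel (X : Term var varsort index bindex opsym)
    (ρ : varsort → var → Option (Term var varsort index bindex opsym))
    (Z : Term var varsort index bindex opsym) : Prop :=
  ∃ qX qZ, tmk qX = X ∧ tmk qZ = Z ∧ QPSubst qX (qassign ρ) qZ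

/-- Capture-avoiding parallel substitution on terms: `psubst X ρ` is `X[ρ]`. -/
noncomputable def psubst (X : Term var varsort index bindex opsym)
    (ρ : varsort → var → Option (Term var varsort index bindex opsym)) :
    Term var varsort index bindex opsym :=
  if h : ∃ Z, PSubstRel X ρ Z then h.choose else X

/-- The graph of parallel substitution on abstractions. -/
def PSubstAbsRel (A : Abstr var varsort index bindex opsym)
    (ρ : varsort → var → Option (Term var varsort index bindex opsym))
    (B : Abstr var varsort index bindex opsym) : Prop :=
  ∃ qA qB, amk qA = A ∧ amk qB = B ∧ QPSubstAbs qA (qassign ρ) qB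

/-- Capture-avoiding parallel substitution on abstractions. -/
noncomputable def psubstAbs (A : Abstr var varsort index bindex opsym)
    (ρ : varsort → var → Option (Term var varsort index bindex opsym)) :
    Abstr var varsort index bindex opsym :=
  if h : ∃ B, PSubstAbsRel A ρ B then h.choose else A

/-! ### Proof development -/

/-- Renaming by a sorted map of variables (bound ones included). -/
noncomputable def qMap (f : varsort → var → var) :
    QTerm var varsort index bindex opsym → QTerm var varsort index bindex opsym :=
  QTerm.rec (motive_1 := fun _ => QTerm var varsort index bindex opsym)
    (motive_2 := fun _ => QAbs var varsort index bindex opsym)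
    (motive_3 := fun _ => Option (QTerm var varsort index bindex opsym))
    (motive_4 := fun _ => Option (QAbs var varsort index bindex opsym))
    (fun xs x => .qVar xs (f xs x))
    (fun d _ _ rinp rbinp => .qOp d rinp rbinp)
    (fun xs x _ rX => .qAbs xs (f xs x) rX)
    none (fun _ r => some r) none (fun _ r => some r)

/-- Renaming in quasiabstractions. -/
noncomputable def qMapA (f : varsort → var → var) :
    QAbs var varsort index bindex opsym → QAbs var varsort index bindex opsym
  | .qAbs xs x X => .qAbs xs (f xs x) (qMap f X)

/-- The sorted transposition as a map. -/
noncomputable def swp (z1 z2 : var) (zs : varsort) : varsort → var → var :=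
  fun xs x => swapVarS var varsort zs xs z1 z2 x

theorem qSwap_eq (z1 z2 : var) (zs : varsort) (X : QTerm var varsort index bindex opsym) :
    qSwap z1 z2 zs X = qMap (swp z1 z2 zs) X := rfl

theorem qMap_var (f : varsort → var → var) (xs : varsort) (x : var) :
    qMap f (.qVar xs x : QTerm var varsort index bindex opsym) = .qVar xs (f xs x) := rfl

theorem qMap_op (f : varsort → var → var) (d : opsym)
    (inp : index → Option (QTerm var varsort index bindex opsym))
    (binp : bindex → Option (QAbs var varsort index bindex opsym)) :
    qMap f (.qOp d inp binp) =
      .qOp d (fun i => (inp i).map (qMap f)) (fun j => (binp j).map (qMapA f)) := by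
  show QTerm.qOp d _ _ = _
  congr 1
  · funext i
    cases h : inp i <;> rfl
  · funext j
    cases h : binp j with
    | none => rfl
    | some A => cases A; rfl

theorem qMapA_abs (f : varsort → var → var) (xs : varsort) (x : var)
    (X : QTerm var varsort index bindex opsym) :
    qMapA f (.qAbs xs x X) = .qAbs xs (f xs x) (qMap f X) := rfl

/-- Plain structural induction. -/
theorem qind0 {P : QTerm var varsort index bindex opsym → Prop}
    {PA : QAbs var varsort index bindex opsym → Prop}
    (hv : ∀ xs x, P (.qVar xs x))
    (ho : ∀ d inp binp, (∀ i X, inp i = some X → P X) → (∀ j A, binp j = some A → PA A) →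
      P (.qOp d inp binp))
    (ha : ∀ xs x X, P X → PA (.qAbs xs x X)) : (∀ X, P X) ∧ ∀ A, PA A := by
  have h : ∀ X, P X := by
    intro X
    refine QTerm.rec (motive_1 := P) (motive_2 := PA)
      (motive_3 := fun o => ∀ X, o = some X → P X)
      (motive_4 := fun o => ∀ A, o = some A → PA A) hv ?_ ha ?_ ?_ ?_ ?_ X
    · intro d inp binp h1 h2
      exact ho d inp binp h1 h2
    · intro X h; cases h
    · intro X hX X' h; cases h; exact hX
    · intro X h; cases h
    · intro X hX X' h; cases h; exact hX
  refine ⟨h, ?_⟩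
  rintro ⟨xs, x, X⟩
  exact ha xs x X (h X)

theorem qMap_id_aux : (∀ X : QTerm var varsort index bindex opsym, qMap (fun _ x => x) X = X) ∧
    ∀ A : QAbs var varsort index bindex opsym, qMapA (fun _ x => x) A = A := by
  apply qind0
  · intro xs x; rfl
  · intro d inp binp h1 h2
    rw [qMap_op]
    congr 1
    · funext i
      cases h : inp i with
      | none => rfl
      | some X => simp [h1 i X h]
    · funext i
      cases h : binp i with
      | none => rfl
      | some X => simp [h2 i X h]
  · intro xs x X h
    rw [qMapA_abs, h]

theorem qMap_comp_aux (f g : varsort → var → var) :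
    (∀ X : QTerm var varsort index bindex opsym,
      qMap f (qMap g X) = qMap (fun s x => f s (g s x)) X) ∧
    ∀ A : QAbs var varsort index bindex opsym,
      qMapA f (qMapA g A) = qMapA (fun s x => f s (g s x)) A := by
  apply qind0
  · intro xs x; rfl
  · intro d inp binp h1 h2
    rw [qMap_op, qMap_op, qMap_op]
    congr 1
    · funext i
      cases h : inp i with
      | none => rfl
      | some X => simp [h1 i X h]
    · funext i
      cases h : binp i with
      | none => rfl
      | some X => simp [h2 i X h]
  · intro xs x X h
    rw [qMapA_abs, qMapA_abs, qMapA_abs, h]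

theorem qMap_id (X : QTerm var varsort index bindex opsym) : qMap (fun _ x => x) X = X :=
  qMap_id_aux.1 X

theorem qMap_comp (f g : varsort → var → var) (X : QTerm var varsort index bindex opsym) :
    qMap f (qMap g X) = qMap (fun s x => f s (g s x)) X :=
  (qMap_comp_aux f g).1 X

/-- Induction where the hypothesis for abstraction bodies holds for all renamings. -/
theorem qind {P : QTerm var varsort index bindex opsym → Prop}
    {PA : QAbs var varsort index bindex opsym → Prop}
    (hv : ∀ xs x, P (.qVar xs x))
    (ho : ∀ d inp binp, (∀ i X, inp i = some X → P X) → (∀ j A, binp j = some A → PA A) →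
      P (.qOp d inp binp))
    (ha : ∀ xs x X, (∀ f, P (qMap f X)) → PA (.qAbs xs x X)) : (∀ X, P X) ∧ ∀ A, PA A := by
  have key : (∀ X, ∀ f, P (qMap f X)) ∧ ∀ A, ∀ f, PA (qMapA f A) := by
    apply qind0
    · intro xs x f; exact hv _ _
    · intro d inp binp h1 h2 f
      rw [qMap_op]
      apply ho
      · intro i X h
        simp only [Option.map_eq_some_iff] at h
        obtain ⟨X0, h, rfl⟩ := h
        exact h1 i X0 h f
      · intro i X h
        simp only [Option.map_eq_some_iff] at h
        obtain ⟨X0, h, rfl⟩ := h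
        exact h2 i X0 h f
    · intro xs x X h f
      rw [qMapA_abs]
      apply ha
      intro g
      rw [qMap_comp]
      exact h _
  have h1 : ∀ X, P X := fun X => by
    have := key.1 X (fun _ x => x)
    rwa [qMap_id] at this
  refine ⟨h1, ?_⟩
  rintro ⟨xs, x, X⟩
  exact ha _ _ _ (fun f => h1 _)

/-- Sortwise injectivity. -/
def SInj (f : varsort → var → var) : Prop := ∀ s a b, f s a = f s b → a = b

theorem swp_inj (z1 z2 : var) (zs : varsort) : SInj (swp z1 z2 zs) := by
  intro s a b h
  simp only [swp, swapVarS, swapVar] at h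
  grind

theorem SInj.comp {f g : varsort → var → var} (hf : SInj f) (hg : SInj g) :
    SInj (fun s x => f s (g s x)) := fun s a b h => hg _ _ _ (hf _ _ _ h)

theorem qMap_swp (f : varsort → var → var) (hf : SInj f) (z x : var) (xs : varsort)
    (X : QTerm var varsort index bindex opsym) :
    qMap f (qMap (swp z x xs) X) = qMap (swp (f xs z) (f xs x) xs) (qMap f X) := by
  rw [qMap_comp, qMap_comp]
  congr 1
  funext s a
  have := hf s
  simp only [swp, swapVarS, swapVar]
  grind

theorem qFresh_var {ys xs : varsort} {y x : var} :
    QFresh ys y (.qVar xs x : QTerm var varsort index bindex opsym) ↔ (ys, y) ≠ (xs, x) :=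
  ⟨fun h => by cases h; assumption, .qVar⟩

theorem qFresh_op {ys : varsort} {y : var} {d : opsym}
    {inp : index → Option (QTerm var varsort index bindex opsym)}
    {binp : bindex → Option (QAbs var varsort index bindex opsym)} :
    QFresh ys y (.qOp d inp binp) ↔ (∀ i X, inp i = some X → QFresh ys y X) ∧
      (∀ j A, binp j = some A → QFreshAbs ys y A) :=
  ⟨fun h => by cases h; constructor <;> assumption, fun h => .qOp h.1 h.2⟩

theorem qFresh_abs {ys xs : varsort} {y x : var} {X : QTerm var varsort index bindex opsym} :
    QFreshAbs ys y (.qAbs xs x X) ↔ (ys, y) = (xs, x) ∨ QFresh ys y X := by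
  constructor
  · intro h
    cases h with
    | qAbs_bound => exact Or.inl rfl
    | qAbs_body h => exact Or.inr h
  · rintro (h | h)
    · cases h; exact .qAbs_bound
    · exact .qAbs_body h

theorem qGood_op {d : opsym}
    {inp : index → Option (QTerm var varsort index bindex opsym)}
    {binp : bindex → Option (QAbs var varsort index bindex opsym)} :
    QGood (.qOp d inp binp) ↔ (∀ i X, inp i = some X → QGood X) ∧
      (∀ j A, binp j = some A → QGoodAbs A) ∧ smallDom var inp ∧ smallDom var binp :=
  ⟨fun h => by cases h; refine ⟨?_, ?_, ?_, ?_⟩ <;> assumption,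
    fun h => .qOp h.1 h.2.1 h.2.2.1 h.2.2.2⟩

theorem qGood_abs {xs : varsort} {x : var} {X : QTerm var varsort index bindex opsym} :
    QGoodAbs (.qAbs xs x X) ↔ QGood X :=
  ⟨fun h => by cases h; assumption, .qAbs⟩

theorem alpha_op {d : opsym}
    {inp inp' : index → Option (QTerm var varsort index bindex opsym)}
    {binp binp' : bindex → Option (QAbs var varsort index bindex opsym)} :
    Alpha (.qOp d inp binp) (.qOp d inp' binp') ↔
      (∀ i, inp i = none ↔ inp' i = none) ∧
      (∀ i X X', inp i = some X → inp' i = some X' → Alpha X X') ∧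
      (∀ j, binp j = none ↔ binp' j = none) ∧
      (∀ j A A', binp j = some A → binp' j = some A' → AlphaAbs A A') :=
  ⟨fun h => by cases h; refine ⟨?_, ?_, ?_, ?_⟩ <;> assumption,
    fun h => .qOp h.1 h.2.1 h.2.2.1 h.2.2.2⟩

theorem alpha_abs {xs xs' : varsort} {x x' : var} {X X' : QTerm var varsort index bindex opsym} :
    AlphaAbs (.qAbs xs x X) (.qAbs xs' x' X') ↔ xs = xs' ∧ ∃ z, z ≠ x ∧ z ≠ x' ∧
      QFresh xs z X ∧ QFresh xs z X' ∧
      Alpha (qMap (swp z x xs) X) (qMap (swp z x' xs) X') := by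
  constructor
  · intro h
    cases h with
    | @qAbs _ _ _ _ _ z h1 h2 h3 h4 =>
      simp only [Set.mem_insert_iff, Set.mem_singleton_iff, not_or] at h1
      exact ⟨rfl, z, h1.1, h1.2, h2, h3, h4⟩
  · rintro ⟨rfl, z, h1, h2, h3, h4, h5⟩
    exact .qAbs (y := z) (by simp [h1, h2]) h3 h4 h5

theorem opt_ex {α β : Type u} {a : Option α} {b : Option β} (h : a = none ↔ b = none) {x : α}
    (hx : a = some x) : ∃ y, b = some y := by
  cases b with
  | none => simp [h.2 rfl] at hx
  | some y => exact ⟨y, rfl⟩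

theorem smallDom_congr {α β γ : Type u} {inp : Input α β} {inp' : Input α γ}
    (h : ∀ i, inp i = none ↔ inp' i = none) : smallDom var inp ↔ smallDom var inp' := by
  have : idom inp = idom inp' := by
    ext i; simp [idom, h i]
  simp [smallDom, this]

theorem qFresh_map_aux (f : varsort → var → var) (hf : SInj f) :
    (∀ X : QTerm var varsort index bindex opsym,
      ∀ ys y, QFresh ys (f ys y) (qMap f X) ↔ QFresh ys y X) ∧
    ∀ A : QAbs var varsort index bindex opsym,
      ∀ ys y, QFreshAbs ys (f ys y) (qMapA f A) ↔ QFreshAbs ys y A := by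
  apply qind0
  · intro xs x ys y
    rw [qMap_var, qFresh_var, qFresh_var]
    have := hf ys
    grind
  · intro d inp binp h1 h2 ys y
    rw [qMap_op, qFresh_op, qFresh_op]
    simp only [Option.map_eq_some_iff]
    constructor
    · rintro ⟨h3, h4⟩
      exact ⟨fun i X h => (h1 i X h _ _).1 (h3 i _ ⟨X, h, rfl⟩),
        fun i X h => (h2 i X h _ _).1 (h4 i _ ⟨X, h, rfl⟩)⟩
    · rintro ⟨h3, h4⟩
      constructor
      · rintro i _ ⟨X, h, rfl⟩
        exact (h1 i X h _ _).2 (h3 i X h)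
      · rintro i _ ⟨X, h, rfl⟩
        exact (h2 i X h _ _).2 (h4 i X h)
  · intro xs x X h ys y
    rw [qMapA_abs, qFresh_abs, qFresh_abs, h]
    have := hf ys
    grind

theorem qFresh_map {f : varsort → var → var} (hf : SInj f)
    (X : QTerm var varsort index bindex opsym) (ys : varsort) (y : var) :
    QFresh ys (f ys y) (qMap f X) ↔ QFresh ys y X := (qFresh_map_aux f hf).1 X ys y

theorem qGood_map_aux (f : varsort → var → var) :
    (∀ X : QTerm var varsort index bindex opsym, QGood (qMap f X) ↔ QGood X) ∧
    ∀ A : QAbs var varsort index bindex opsym, QGoodAbs (qMapA f A) ↔ QGoodAbs A := by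
  apply qind0
  · intro xs x
    exact ⟨fun _ => .qVar, fun _ => .qVar⟩
  · intro d inp binp h1 h2
    rw [qMap_op, qGood_op, qGood_op]
    simp only [Option.map_eq_some_iff]
    rw [smallDom_congr (inp := fun i => (inp i).map (qMap f)) (inp' := inp) (by simp),
      smallDom_congr (inp := fun i => (binp i).map (qMapA f)) (inp' := binp) (by simp)]
    constructor
    · rintro ⟨h3, h4, h5⟩
      exact ⟨fun i X h => (h1 i X h).1 (h3 i _ ⟨X, h, rfl⟩),
        fun i X h => (h2 i X h).1 (h4 i _ ⟨X, h, rfl⟩), h5⟩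
    · rintro ⟨h3, h4, h5⟩
      refine ⟨?_, ?_, h5⟩
      · rintro i _ ⟨X, h, rfl⟩
        exact (h1 i X h).2 (h3 i X h)
      · rintro i _ ⟨X, h, rfl⟩
        exact (h2 i X h).2 (h4 i X h)
  · intro xs x X h
    rw [qMapA_abs, qGood_abs, qGood_abs, h]

theorem qGood_map {f : varsort → var → var} {X : QTerm var varsort index bindex opsym} :
    QGood (qMap f X) ↔ QGood X := (qGood_map_aux f).1 X

theorem alpha_symm_aux :
    (∀ X : QTerm var varsort index bindex opsym, ∀ X', (Alpha X X' → Alpha X' X)) ∧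
    ∀ A : QAbs var varsort index bindex opsym, ∀ A', (AlphaAbs A A' → AlphaAbs A' A) := by
  apply qind
  · intro xs x X' h
    cases h; exact .qVar
  · intro d inp binp h1 h2 X' h
    cases h with
    | qOp a b c e =>
      exact .qOp (fun i => (a i).symm) (fun i X X' h h' => h1 i X' h' _ (b i X' X h' h))
        (fun i => (c i).symm) (fun i X X' h h' => h2 i X' h' _ (e i X' X h' h))
  · rintro xs x X ih ⟨xs', x', X'⟩ h
    rw [alpha_abs] at h ⊢
    obtain ⟨rfl, z, h1, h2, h3, h4, h5⟩ := h
    exact ⟨rfl, z, h2, h1, h4, h3, ih _ _ h5⟩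

theorem alpha_symm {X X' : QTerm var varsort index bindex opsym} (h : Alpha X X') :
    Alpha X' X := alpha_symm_aux.1 X X' h

theorem alphaAbs_symm {X X' : QAbs var varsort index bindex opsym} (h : AlphaAbs X X') :
    AlphaAbs X' X := alpha_symm_aux.2 X X' h

theorem alpha_good_aux :
    (∀ X : QTerm var varsort index bindex opsym, ∀ X', Alpha X X' → QGood X → QGood X') ∧
    ∀ A : QAbs var varsort index bindex opsym, ∀ A', AlphaAbs A A' → QGoodAbs A → QGoodAbs A' := by
  apply qind
  · intro xs x X' h _
    cases h; exact .qVar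
  · intro d inp binp h1 h2 X' h hg
    cases h with
    | qOp a b c e =>
      rw [qGood_op] at hg ⊢
      obtain ⟨g1, g2, g3, g4⟩ := hg
      refine ⟨?_, ?_, (smallDom_congr a).1 g3, (smallDom_congr c).1 g4⟩
      · intro i X' h'
        obtain ⟨X, hX⟩ := opt_ex (a i).symm h'
        exact h1 i X hX _ (b i X X' hX h') (g1 i X hX)
      · intro i X' h'
        obtain ⟨X, hX⟩ := opt_ex (c i).symm h'
        exact h2 i X hX _ (e i X X' hX h') (g2 i X hX)
  · rintro xs x X ih ⟨xs', x', X'⟩ h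
    rw [alpha_abs] at h
    rw [qGood_abs, qGood_abs]
    obtain ⟨rfl, z, h1, h2, h3, h4, h5⟩ := h
    have := ih _ _ h5
    rwa [qGood_map, qGood_map] at this

theorem alpha_good {X X' : QTerm var varsort index bindex opsym} (h : Alpha X X')
    (hg : QGood X) : QGood X' := alpha_good_aux.1 X X' h hg

theorem alphaAbs_good {X X' : QAbs var varsort index bindex opsym} (h : AlphaAbs X X')
    (hg : QGoodAbs X) : QGoodAbs X' := alpha_good_aux.2 X X' h hg

theorem alpha_map_aux (f : varsort → var → var) (hf : SInj f) :
    (∀ X : QTerm var varsort index bindex opsym, ∀ X', Alpha X X' → Alpha (qMap f X) (qMap f X')) ∧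
    ∀ A : QAbs var varsort index bindex opsym, ∀ A', AlphaAbs A A' →
      AlphaAbs (qMapA f A) (qMapA f A') := by
  apply qind
  · intro xs x X' h
    cases h; exact .qVar
  · intro d inp binp h1 h2 X' h
    cases h with
    | qOp a b c e =>
      rw [qMap_op, qMap_op, alpha_op]
      simp only [Option.map_eq_some_iff, Option.map_eq_none_iff]
      refine ⟨a, ?_, c, ?_⟩
      · rintro i _ _ ⟨X, h, rfl⟩ ⟨X', h', rfl⟩
        exact h1 i X h _ (b i _ _ h h')
      · rintro i _ _ ⟨X, h, rfl⟩ ⟨X', h', rfl⟩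
        exact h2 i X h _ (e i _ _ h h')
  · rintro xs x X ih ⟨xs', x', X'⟩ h
    rw [qMapA_abs, qMapA_abs]
    rw [alpha_abs] at h ⊢
    obtain ⟨rfl, z, h1, h2, h3, h4, h5⟩ := h
    refine ⟨rfl, f xs z, fun e => h1 (hf _ _ _ e), fun e => h2 (hf _ _ _ e),
      (qFresh_map hf _ _ _).2 h3, (qFresh_map hf _ _ _).2 h4, ?_⟩
    rw [← qMap_swp f hf, ← qMap_swp f hf]
    exact ih _ _ h5

theorem alpha_map {f : varsort → var → var} (hf : SInj f)
    {X X' : QTerm var varsort index bindex opsym} (h : Alpha X X') :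
    Alpha (qMap f X) (qMap f X') := (alpha_map_aux f hf).1 X X' h

theorem qFresh_swp {z x y : var} {xs ys : varsort} {X : QTerm var varsort index bindex opsym} :
    QFresh ys y (qMap (swp z x xs) X) ↔ QFresh ys (swp z x xs ys y) X := by
  rw [← qFresh_map (swp_inj z x xs) X ys (swp z x xs ys y)]
  have : swp z x xs ys (swp z x xs ys y) = y := by
    simp only [swp, swapVarS, swapVar]; grind
  rw [this]

theorem swp_left (z x : var) (xs : varsort) : swp z x xs xs z = x := by
  simp [swp, swapVarS, swapVar]

theorem swp_right (z x : var) (xs : varsort) : swp z x xs xs x = z := by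
  simp only [swp, swapVarS, swapVar]; grind

theorem swp_other {z x y : var} {xs ys : varsort} (h1 : (ys, y) ≠ (xs, z))
    (h2 : (ys, y) ≠ (xs, x)) : swp z x xs ys y = y := by
  simp only [swp, swapVarS, swapVar]; grind

theorem alpha_fresh_aux :
    (∀ X : QTerm var varsort index bindex opsym, ∀ X' ys y, Alpha X X' →
      QFresh ys y X → QFresh ys y X') ∧
    ∀ A : QAbs var varsort index bindex opsym, ∀ A' ys y, AlphaAbs A A' →
      QFreshAbs ys y A → QFreshAbs ys y A' := by
  apply qind
  · intro xs x X' ys y h hf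
    cases h; exact hf
  · intro d inp binp h1 h2 X' ys y h hf
    cases h with
    | qOp a b c e =>
      rw [qFresh_op] at hf ⊢
      constructor
      · intro i X' h'
        obtain ⟨X, hX⟩ := opt_ex (a i).symm h'
        exact h1 i X hX _ _ _ (b i X X' hX h') (hf.1 i X hX)
      · intro i X' h'
        obtain ⟨X, hX⟩ := opt_ex (c i).symm h'
        exact h2 i X hX _ _ _ (e i X X' hX h') (hf.2 i X hX)
  · rintro xs x X ih ⟨xs', x', X'⟩ ys y h hf
    rw [alpha_abs] at h
    rw [qFresh_abs] at hf ⊢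
    obtain ⟨rfl, z, h1, h2, h3, h4, h5⟩ := h
    by_cases e1 : (ys, y) = (xs, x')
    · exact Or.inl e1
    right
    by_cases e2 : (ys, y) = (xs, z)
    · cases e2; exact h4
    have := ih _ _ ys y h5
    rw [qFresh_swp, qFresh_swp, swp_other e2 e1] at this
    apply this
    by_cases e3 : (ys, y) = (xs, x)
    · cases e3
      rw [swp_right]; exact h3
    · rw [swp_other e2 e3]
      exact hf.resolve_left e3

theorem alpha_fresh {X X' : QTerm var varsort index bindex opsym} {ys : varsort} {y : var}
    (h : Alpha X X') (hf : QFresh ys y X) : QFresh ys y X' := alpha_fresh_aux.1 X X' ys y h hf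

/-! ### Existence of fresh variables -/

theorem small_aux (hreg : (Cardinal.mk var).IsRegular) (ys : varsort) :
    (∀ X : QTerm var varsort index bindex opsym, QGood X →
      Cardinal.mk {y : var | ¬ QFresh ys y X} < Cardinal.mk var) ∧
    ∀ A : QAbs var varsort index bindex opsym, QGoodAbs A →
      Cardinal.mk {y : var | ¬ QFreshAbs ys y A} < Cardinal.mk var := by
  have hinf := hreg.aleph0_le
  apply qind0
  · intro xs x _
    refine lt_of_le_of_lt (Cardinal.mk_le_mk_of_subset (t := {x}) ?_) ?_
    · intro y hy
      simp only [Set.mem_setOf_eq, qFresh_var, not_not] at hy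
      cases hy; rfl
    · rw [Cardinal.mk_singleton]
      exact lt_of_lt_of_le Cardinal.one_lt_aleph0 hinf
  · intro d inp binp h1 h2 hg
    rw [qGood_op] at hg
    obtain ⟨g1, g2, g3, g4⟩ := hg
    have hs : {y : var | ¬ QFresh ys y (QTerm.qOp d inp binp)} ⊆
        (⋃ i : idom inp, {y | ∃ X, inp i = some X ∧ ¬ QFresh ys y X}) ∪
        (⋃ i : idom binp, {y | ∃ X, binp i = some X ∧ ¬ QFreshAbs ys y X}) := by
      intro y hy
      simp only [Set.mem_setOf_eq, qFresh_op, not_and_or, not_forall] at hy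
      rcases hy with ⟨i, X, h, hX⟩ | ⟨i, X, h, hX⟩
      · left
        exact Set.mem_iUnion.2 ⟨⟨i, by simp [idom, h]⟩, X, h, hX⟩
      · right
        exact Set.mem_iUnion.2 ⟨⟨i, by simp [idom, h]⟩, X, h, hX⟩
    refine lt_of_le_of_lt ((Cardinal.mk_le_mk_of_subset hs).trans (Cardinal.mk_union_le _ _)) ?_
    apply Cardinal.add_lt_of_lt hinf
    · rw [Cardinal.card_iUnion_lt_iff_forall_of_isRegular hreg g3]
      rintro ⟨i, hi⟩
      obtain ⟨X, hX⟩ := Option.ne_none_iff_exists'.1 hi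
      simpa [hX] using h1 i X hX (g1 i X hX)
    · rw [Cardinal.card_iUnion_lt_iff_forall_of_isRegular hreg g4]
      rintro ⟨i, hi⟩
      obtain ⟨X, hX⟩ := Option.ne_none_iff_exists'.1 hi
      simpa [hX] using h2 i X hX (g2 i X hX)
  · intro xs x X h hg
    rw [qGood_abs] at hg
    refine lt_of_le_of_lt (Cardinal.mk_le_mk_of_subset ?_) (h hg)
    intro y hy hy'
    exact hy (qFresh_abs.2 (Or.inr hy'))

theorem ex_fresh (hreg : (Cardinal.mk var).IsRegular) (ys : varsort)
    (Ts : List (QTerm var varsort index bindex opsym)) (vs : List var)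
    (hT : ∀ T ∈ Ts, QGood T) : ∃ z, (∀ T ∈ Ts, QFresh ys z T) ∧ ∀ v ∈ vs, z ≠ v := by
  have hinf := hreg.aleph0_le
  have h1 : Cardinal.mk {y : var | ∃ T ∈ Ts, ¬ QFresh ys y T} < Cardinal.mk var := by
    induction Ts with
    | nil => simpa using hreg.pos
    | cons T Ts ih =>
      have := ih (fun T h => hT T (List.mem_cons_of_mem _ h))
      have h2 := (small_aux hreg ys).1 T (hT T List.mem_cons_self)
      refine lt_of_le_of_lt ((Cardinal.mk_le_mk_of_subset ?_).trans (Cardinal.mk_union_le _ _))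
        (Cardinal.add_lt_of_lt hinf h2 this)
      rintro y ⟨T', h, h'⟩
      rcases List.mem_cons.1 h with rfl | h
      · exact Or.inl h'
      · exact Or.inr ⟨T', h, h'⟩
  have h2 : Cardinal.mk {y : var | y ∈ vs} < Cardinal.mk var :=
    lt_of_lt_of_le (Cardinal.lt_aleph0_iff_set_finite.2 (List.finite_toSet vs)) hinf
  have h3 := lt_of_le_of_lt (Cardinal.mk_union_le _ _) (Cardinal.add_lt_of_lt hinf h1 h2)
  by_contra hcon
  push Not at hcon
  have : ({y : var | ∃ T ∈ Ts, ¬ QFresh ys y T} ∪ {y : var | y ∈ vs}) = Set.univ := by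
    ext z
    simp only [Set.mem_union, Set.mem_setOf_eq, Set.mem_univ, iff_true]
    by_contra hz
    push Not at hz
    obtain ⟨v, hv, rfl⟩ := hcon z hz.1
    exact hz.2 hv
  rw [this, Cardinal.mk_univ] at h3
  exact lt_irrefl _ h3

/-! ### Alpha is an equivalence on good items -/

theorem alpha_agree_aux (hreg : (Cardinal.mk var).IsRegular) :
    (∀ X : QTerm var varsort index bindex opsym, QGood X → ∀ f g, SInj f → SInj g →
      (∀ s y, ¬ QFresh s y X → f s y = g s y) → Alpha (qMap f X) (qMap g X)) ∧
    ∀ A : QAbs var varsort index bindex opsym, QGoodAbs A → ∀ f g, SInj f → SInj g →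
      (∀ s y, ¬ QFreshAbs s y A → f s y = g s y) → AlphaAbs (qMapA f A) (qMapA g A) := by
  apply qind0
  · intro xs x _ f g hf hg h
    have := h xs x (by simp [qFresh_var])
    rw [qMap_var, qMap_var, this]
    exact .qVar
  · intro d inp binp h1 h2 hG f g hf hg h
    rw [qGood_op] at hG
    rw [qMap_op, qMap_op, alpha_op]
    simp only [Option.map_eq_some_iff, Option.map_eq_none_iff]
    refine ⟨by simp, ?_, by simp, ?_⟩
    · rintro i _ _ ⟨X, e, rfl⟩ ⟨X', e', rfl⟩
      rw [e] at e'; cases e'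
      exact h1 i X e (hG.1 i X e) f g hf hg
        (fun s y hy => h s y (fun h => hy ((qFresh_op.1 h).1 i X e)))
    · rintro i _ _ ⟨X, e, rfl⟩ ⟨X', e', rfl⟩
      rw [e] at e'; cases e'
      exact h2 i X e (hG.2.1 i X e) f g hf hg
        (fun s y hy => h s y (fun h => hy ((qFresh_op.1 h).2 i X e)))
  · intro xs x X ih hG f g hf hg h
    rw [qGood_abs] at hG
    obtain ⟨z, hz, hv⟩ := ex_fresh hreg xs [qMap f X, qMap g X] [f xs x, g xs x]
      (by simp [qGood_map, hG])
    simp only [List.mem_cons, List.not_mem_nil, or_false, forall_eq_or_imp, forall_eq] at hz hv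
    rw [qMapA_abs, qMapA_abs, alpha_abs]
    refine ⟨rfl, z, hv.1, hv.2, hz.1, hz.2, ?_⟩
    rw [qMap_comp, qMap_comp]
    refine ih hG _ _ ((swp_inj _ _ _).comp hf) ((swp_inj _ _ _).comp hg) ?_
    intro s y hy
    by_cases e : (s, y) = (xs, x)
    · cases e
      rw [swp_right, swp_right]
    have e1 : f s y = g s y := h s y (by
      rw [qFresh_abs]
      exact fun h => h.elim e hy)
    rw [swp_other, swp_other, e1]
    · intro h; cases h
      exact hy ((qFresh_map hg _ _ _).1 hz.2)
    · intro h
      simp only [Prod.mk.injEq] at h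
      obtain ⟨rfl, h⟩ := h
      exact e (by rw [hg _ _ _ h])
    · intro h
      simp only [Prod.mk.injEq] at h
      obtain ⟨rfl, hzz⟩ := h
      rw [← hzz] at hz
      exact hy ((qFresh_map hf _ _ _).1 hz.1)
    · intro h
      simp only [Prod.mk.injEq] at h
      obtain ⟨rfl, h⟩ := h
      exact e (by rw [hf _ _ _ h])

theorem alpha_agree (hreg : (Cardinal.mk var).IsRegular)
    {X : QTerm var varsort index bindex opsym} (hG : QGood X) {f g : varsort → var → var}
    (hf : SInj f) (hg : SInj g) (h : ∀ s y, ¬ QFresh s y X → f s y = g s y) :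
    Alpha (qMap f X) (qMap g X) := (alpha_agree_aux hreg).1 X hG f g hf hg h

theorem alpha_refl (hreg : (Cardinal.mk var).IsRegular)
    {X : QTerm var varsort index bindex opsym} (hG : QGood X) : Alpha X X := by
  have := alpha_agree hreg hG (f := fun _ x => x) (g := fun _ x => x)
    (fun _ _ _ h => h) (fun _ _ _ h => h) (fun _ _ _ => rfl)
  rwa [qMap_id] at this

/-- Swapping two fresh variables does nothing up to alpha. -/
theorem alpha_swp_fresh (hreg : (Cardinal.mk var).IsRegular)
    {X : QTerm var varsort index bindex opsym} (hG : QGood X) {z x : var} {xs : varsort}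
    (hz : QFresh xs z X) (hx : QFresh xs x X) : Alpha (qMap (swp z x xs) X) X := by
  have := alpha_agree hreg hG (f := swp z x xs) (g := fun _ x => x)
    (swp_inj _ _ _) (fun _ _ _ h => h) (fun s y hy => swp_other
      (by rintro ⟨⟩; exact hy hz) (by rintro ⟨⟩; exact hy hx))
  rwa [qMap_id] at this

theorem alpha_swp_swp (hreg : (Cardinal.mk var).IsRegular)
    {X : QTerm var varsort index bindex opsym} (hG : QGood X) {v z x : var} {xs : varsort}
    (hz : QFresh xs z X) (hv : QFresh xs v X) (hvx : v ≠ x) (hzx : z ≠ x) :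
    Alpha (qMap (swp v x xs) X) (qMap (swp v z xs) (qMap (swp z x xs) X)) := by
  rw [qMap_comp]
  refine alpha_agree hreg hG (swp_inj _ _ _) ((swp_inj _ _ _).comp (swp_inj _ _ _)) ?_
  intro s y hy
  have h1 : (s, y) ≠ (xs, z) := by rintro ⟨⟩; exact hy hz
  have h2 : (s, y) ≠ (xs, v) := by rintro ⟨⟩; exact hy hv
  by_cases e : (s, y) = (xs, x)
  · cases e; simp only [swp_right]
  · rw [swp_other h2 e, swp_other h1 e, swp_other h2 h1]

theorem alpha_trans_aux (hreg : (Cardinal.mk var).IsRegular) :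
    (∀ X : QTerm var varsort index bindex opsym, QGood X → ∀ X' X'', Alpha X X' → Alpha X' X'' →
      Alpha X X'') ∧
    ∀ A : QAbs var varsort index bindex opsym, QGoodAbs A → ∀ A' A'', AlphaAbs A A' →
      AlphaAbs A' A'' → AlphaAbs A A'' := by
  apply qind
  · intro xs x _ X' X'' h h'
    cases h; exact h'
  · intro d inp binp h1 h2 hG X' X'' h h'
    rw [qGood_op] at hG
    cases h with
    | qOp a b c e =>
      cases h' with
      | qOp a' b' c' e' =>
        refine .qOp (fun i => (a i).trans (a' i)) ?_ (fun i => (c i).trans (c' i)) ?_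
        · intro i X X'' k k''
          obtain ⟨X', k'⟩ := opt_ex (a i) k
          exact h1 i X k (hG.1 i X k) _ _ (b i _ _ k k') (b' i _ _ k' k'')
        · intro i X X'' k k''
          obtain ⟨X', k'⟩ := opt_ex (c i) k
          exact h2 i X k (hG.2.1 i X k) _ _ (e i _ _ k k') (e' i _ _ k' k'')
  · rintro xs x X ih hG ⟨xs', x', X'⟩ ⟨xs'', x'', X''⟩ h h'
    have hG' := alphaAbs_good h hG
    have hG'' := alphaAbs_good h' hG'
    rw [qGood_abs] at hG hG' hG''
    rw [alpha_abs] at h h' ⊢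
    obtain ⟨rfl, z, h1, h2, h3, h4, h5⟩ := h
    obtain ⟨rfl, w, k1, k2, k3, k4, k5⟩ := h'
    obtain ⟨v, hv, hv'⟩ := ex_fresh hreg xs [X, X', X''] [x, x', x'']
      (by simp [hG, hG', hG''])
    simp only [List.mem_cons, List.not_mem_nil, or_false, forall_eq_or_imp, forall_eq] at hv hv'
    obtain ⟨f1, f2, f3⟩ := hv
    obtain ⟨n1, n2, n3⟩ := hv'
    refine ⟨rfl, v, n1, n3, f1, f3, ?_⟩
    have tr : ∀ {A B}, Alpha (qMap (swp v x xs) X) A → Alpha A B →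
        Alpha (qMap (swp v x xs) X) B := fun a b => ih _ (qGood_map.2 hG) _ _ a b
    refine tr (tr (tr (tr (tr (alpha_swp_swp hreg hG h3 f1 n1 h1)
      (alpha_map (swp_inj v z xs) h5)) (alpha_symm (alpha_swp_swp hreg hG' h4 f2 n2 h2)))
      (alpha_swp_swp hreg hG' k3 f2 n2 k1)) (alpha_map (swp_inj v w xs) k5))
      (alpha_symm (alpha_swp_swp hreg hG'' k4 f3 n3 k2))

theorem alpha_trans (hreg : (Cardinal.mk var).IsRegular)
    {X X' X'' : QTerm var varsort index bindex opsym} (hG : QGood X)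
    (h : Alpha X X') (h' : Alpha X' X'') : Alpha X X'' :=
  (alpha_trans_aux hreg).1 X hG X' X'' h h'

theorem alphaAbs_trans (hreg : (Cardinal.mk var).IsRegular)
    {X X' X'' : QAbs var varsort index bindex opsym} (hG : QGoodAbs X)
    (h : AlphaAbs X X') (h' : AlphaAbs X' X'') : AlphaAbs X X'' :=
  (alpha_trans_aux hreg).2 X hG X' X'' h h'

/-- The "any fresh" property of alpha-equivalent abstractions. -/
theorem alphaAbs_any (hreg : (Cardinal.mk var).IsRegular)
    {X X' : QTerm var varsort index bindex opsym} {xs : varsort} {x x' w : var} (hG : QGood X)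
    (h : AlphaAbs (.qAbs xs x X) (.qAbs xs x' X')) (hw : w ≠ x) (hw' : w ≠ x')
    (hf : QFresh xs w X) (hf' : QFresh xs w X') :
    Alpha (qMap (swp w x xs) X) (qMap (swp w x' xs) X') := by
  have hG' := qGood_abs.1 (alphaAbs_good h (qGood_abs.2 hG))
  rw [alpha_abs] at h
  obtain ⟨-, z, h1, h2, h3, h4, h5⟩ := h
  have hg := (qGood_map (f := swp w x xs)).2 hG
  exact alpha_trans hreg hg (alpha_trans hreg hg (alpha_swp_swp hreg hG h3 hf hw h1)
    (alpha_map (swp_inj w z xs) h5)) (alpha_symm (alpha_swp_swp hreg hG' h4 hf' hw' h2))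

theorem alphaAbs_of_swp (hreg : (Cardinal.mk var).IsRegular)
    {X X' : QTerm var varsort index bindex opsym} {xs : varsort} {x : var} (hG : QGood X)
    (h : Alpha X X') : AlphaAbs (.qAbs xs x X) (.qAbs xs x X') := by
  obtain ⟨v, hv, hv'⟩ := ex_fresh hreg xs [X] [x] (by simp [hG])
  simp only [List.mem_cons, List.not_mem_nil, or_false, forall_eq] at hv hv'
  rw [alpha_abs]
  exact ⟨rfl, v, hv', hv', hv, alpha_fresh h hv, alpha_map (swp_inj _ _ _) h⟩

/-! ### Substitution on quasiterms -/

theorem qsubst_map_aux (f : varsort → var → var) (hf : SInj f) :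
    (∀ X : QTerm var varsort index bindex opsym, ∀ Y y ys Z, QSubst X Y y ys Z →
      QSubst (qMap f X) (qMap f Y) (f ys y) ys (qMap f Z)) ∧
    ∀ A : QAbs var varsort index bindex opsym, ∀ Y y ys Z, QSubstAbs A Y y ys Z →
      QSubstAbs (qMapA f A) (qMap f Y) (f ys y) ys (qMapA f Z) := by
  apply qind0
  · intro xs x Y y ys Z h
    cases h with
    | var_eq => exact .var_eq
    | var_ne h =>
      rw [qMap_var]
      refine .var_ne ?_
      have := hf xs
      grind
  · intro d inp binp h1 h2 Y y ys Z h
    cases h with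
    | op a b c e =>
      rw [qMap_op, qMap_op]
      refine .op ?_ ?_ ?_ ?_
      · simpa using a
      · simp only [Option.map_eq_some_iff]
        rintro i _ _ ⟨X, h, rfl⟩ ⟨X', h', rfl⟩
        exact h1 i X h _ _ _ _ (b i _ _ h h')
      · simpa using c
      · simp only [Option.map_eq_some_iff]
        rintro i _ _ ⟨X, h, rfl⟩ ⟨X', h', rfl⟩
        exact h2 i X h _ _ _ _ (e i _ _ h h')
  · intro xs x X ih Y y ys Z h
    cases h with
    | abs a b c =>
      refine .abs ?_ ((qFresh_map hf _ _ _).2 b) (ih _ _ _ _ c)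
      have := hf xs
      grind

theorem qsubst_map {f : varsort → var → var} (hf : SInj f)
    {X Y Z : QTerm var varsort index bindex opsym} {y : var} {ys : varsort}
    (h : QSubst X Y y ys Z) : QSubst (qMap f X) (qMap f Y) (f ys y) ys (qMap f Z) :=
  (qsubst_map_aux f hf).1 X Y y ys Z h

theorem qsubst_good_aux :
    (∀ X : QTerm var varsort index bindex opsym, ∀ Y y ys Z, QSubst X Y y ys Z →
      QGood X → QGood Y → QGood Z) ∧
    ∀ A : QAbs var varsort index bindex opsym, ∀ Y y ys Z, QSubstAbs A Y y ys Z →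
      QGoodAbs A → QGood Y → QGoodAbs Z := by
  apply qind0
  · intro xs x Y y ys Z h _ hY
    cases h with
    | var_eq => exact hY
    | var_ne h => exact .qVar
  · intro d inp binp h1 h2 Y y ys Z h hG hY
    cases h with
    | op a b c e =>
      rw [qGood_op] at hG ⊢
      obtain ⟨g1, g2, g3, g4⟩ := hG
      refine ⟨?_, ?_, (smallDom_congr a).1 g3, (smallDom_congr c).1 g4⟩
      · intro i X' h'
        obtain ⟨X, hX⟩ := opt_ex (a i).symm h'
        exact h1 i X hX _ _ _ _ (b i X X' hX h') (g1 i X hX) hY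
      · intro i X' h'
        obtain ⟨X, hX⟩ := opt_ex (c i).symm h'
        exact h2 i X hX _ _ _ _ (e i X X' hX h') (g2 i X hX) hY
  · intro xs x X ih Y y ys Z h hG hY
    cases h with
    | abs a b c =>
      rw [qGood_abs] at hG ⊢
      exact ih _ _ _ _ c hG hY

theorem qsubst_unique_aux (hreg : (Cardinal.mk var).IsRegular) :
    (∀ X : QTerm var varsort index bindex opsym, QGood X → ∀ X' Y Y' y ys Z Z', Alpha X X' →
      QGood Y → Alpha Y Y' → QSubst X Y y ys Z → QSubst X' Y' y ys Z' → Alpha Z Z') ∧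
    ∀ X : QAbs var varsort index bindex opsym, QGoodAbs X → ∀ X' Y Y' y ys Z Z', AlphaAbs X X' →
      QGood Y → Alpha Y Y' → QSubstAbs X Y y ys Z → QSubstAbs X' Y' y ys Z' → AlphaAbs Z Z' := by
  apply qind
  · intro xs x _ X' Y Y' y ys Z Z' h hY hYY h1 h2
    cases h
    cases h1 with
    | var_eq =>
      cases h2 with
      | var_eq => exact hYY
      | var_ne h => exact absurd rfl h
    | var_ne h =>
      cases h2 with
      | var_eq => exact absurd rfl h
      | var_ne h => exact .qVar
  · intro d inp binp ih1 ih2 hG X' Y Y' y ys Z Z' h hY hYY h1 h2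
    rw [qGood_op] at hG
    cases h with
    | qOp p q r s =>
      cases h1 with
      | op a b c e =>
        cases h2 with
        | op a' b' c' e' =>
          refine .qOp (fun i => (a i).symm.trans ((p i).trans (a' i))) ?_
            (fun i => (c i).symm.trans ((r i).trans (c' i))) ?_
          · intro i Z Z' k k'
            obtain ⟨X, hX⟩ := opt_ex (a i).symm k
            obtain ⟨X', hX'⟩ := opt_ex (a' i).symm k'
            exact ih1 i X hX (hG.1 i X hX) _ _ _ _ _ _ _ (q i _ _ hX hX') hY hYY
              (b i _ _ hX k) (b' i _ _ hX' k')
          · intro i Z Z' k k'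
            obtain ⟨X, hX⟩ := opt_ex (c i).symm k
            obtain ⟨X', hX'⟩ := opt_ex (c' i).symm k'
            exact ih2 i X hX (hG.2.1 i X hX) _ _ _ _ _ _ _ (s i _ _ hX hX') hY hYY
              (e i _ _ hX k) (e' i _ _ hX' k')
  · rintro xs x X ih hG ⟨xs', x', X'⟩ Y Y' y ys Z Z' h hY hYY h1 h2
    obtain rfl : xs = xs' := (alpha_abs.1 h).1
    have hG' := alphaAbs_good h hG
    rw [qGood_abs] at hG hG'
    have hY' := alpha_good hYY hY
    cases h1 with
    | @abs _ _ _ _ _ _ Z a b c =>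
      cases h2 with
      | @abs _ _ _ _ _ _ Z' a' b' c' =>
        have hZ := qsubst_good_aux.1 _ _ _ _ _ c hG hY
        have hZ' := qsubst_good_aux.1 _ _ _ _ _ c' hG' hY'
        obtain ⟨w, hw, hw'⟩ := ex_fresh hreg xs [X, X', Y, Y', Z, Z'] [x, x', y]
          (by simp [hG, hG', hY, hY', hZ, hZ'])
        simp only [List.mem_cons, List.not_mem_nil, or_false, forall_eq_or_imp, forall_eq]
          at hw hw'
        obtain ⟨f1, f2, f3, f4, f5, f6⟩ := hw
        obtain ⟨n1, n2, n3⟩ := hw'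
        have hyw : (ys, y) ≠ (xs, w) := by
          rintro ⟨⟩; exact n3 rfl
        rw [alpha_abs]
        refine ⟨rfl, w, n1, n2, f5, f6, ?_⟩
        have s1 := qsubst_map (swp_inj w x xs) c
        have s2 := qsubst_map (swp_inj w x' xs) c'
        rw [swp_other hyw a.symm] at s1
        rw [swp_other hyw a'.symm] at s2
        refine ih _ (qGood_map.2 hG) _ _ _ _ _ _ _ (alphaAbs_any hreg hG h n1 n2 f1 f2)
          (qGood_map.2 hY) ?_ s1 s2
        have hg := (qGood_map (f := swp w x xs)).2 hY
        exact alpha_trans hreg hg (alpha_trans hreg hg (alpha_swp_fresh hreg hY f3 b) hYY)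
          (alpha_symm (alpha_swp_fresh hreg hY' f4 b'))

theorem qsubst_ex_aux (hreg : (Cardinal.mk var).IsRegular) :
    (∀ X : QTerm var varsort index bindex opsym, QGood X → ∀ Y y ys, QGood Y →
      ∃ X' Z, Alpha X X' ∧ QSubst X' Y y ys Z) ∧
    ∀ X : QAbs var varsort index bindex opsym, QGoodAbs X → ∀ Y y ys, QGood Y →
      ∃ X' Z, AlphaAbs X X' ∧ QSubstAbs X' Y y ys Z := by
  apply qind0
  · intro xs x _ Y y ys hY
    by_cases h : (xs, x) = (ys, y)
    · cases h
      exact ⟨_, _, .qVar, .var_eq⟩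
    · exact ⟨_, _, .qVar, .var_ne h⟩
  · intro d inp binp ih1 ih2 hG Y y ys hY
    rw [qGood_op] at hG
    have k1 : ∀ i, ∃ o o' : Option (QTerm var varsort index bindex opsym),
        (inp i = none ↔ o = none) ∧ (o = none ↔ o' = none) ∧
        (∀ X X', inp i = some X → o = some X' → Alpha X X') ∧
        (∀ X Z, o = some X → o' = some Z → QSubst X Y y ys Z) := by
      intro i
      cases h : inp i with
      | none => exact ⟨none, none, by simp⟩
      | some X =>
        obtain ⟨X', Z, a, b⟩ := ih1 i X h (hG.1 i X h) Y y ys hY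
        exact ⟨some X', some Z, by simp, by simp, by rintro _ _ ⟨⟩ ⟨⟩; exact a,
          by rintro _ _ ⟨⟩ ⟨⟩; exact b⟩
    have k2 : ∀ i, ∃ o o' : Option (QAbs var varsort index bindex opsym),
        (binp i = none ↔ o = none) ∧ (o = none ↔ o' = none) ∧
        (∀ X X', binp i = some X → o = some X' → AlphaAbs X X') ∧
        (∀ X Z, o = some X → o' = some Z → QSubstAbs X Y y ys Z) := by
      intro i
      cases h : binp i with
      | none => exact ⟨none, none, by simp⟩
      | some X =>
        obtain ⟨X', Z, a, b⟩ := ih2 i X h (hG.2.1 i X h) Y y ys hY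
        exact ⟨some X', some Z, by simp, by simp, by rintro _ _ ⟨⟩ ⟨⟩; exact a,
          by rintro _ _ ⟨⟩ ⟨⟩; exact b⟩
    choose o o' a1 a2 a3 a4 using k1
    choose p p' b1 b2 b3 b4 using k2
    exact ⟨.qOp d o p, .qOp d o' p', .qOp a1 a3 b1 b3, .op a2 a4 b2 b4⟩
  · intro xs x X ih hG Y y ys hY
    have hGA := hG
    rw [qGood_abs] at hG
    obtain ⟨w, hw, hw'⟩ := ex_fresh hreg xs [X, Y] [x, y] (by simp [hG, hY])
    simp only [List.mem_cons, List.not_mem_nil, or_false, forall_eq_or_imp, forall_eq]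
      at hw hw'
    obtain ⟨f1, f2⟩ := hw
    obtain ⟨n1, n2⟩ := hw'
    obtain ⟨X', Z, hX', hs⟩ := ih hG (qMap (swp w x xs) Y) (swp w x xs ys y) ys
      (qGood_map.2 hY)
    have hs' := qsubst_map (swp_inj w x xs) hs
    have inv : ∀ s a, swp w x xs s (swp w x xs s a) = a := by
      intro s a
      simp only [swp, swapVarS, swapVar]; grind
    rw [qMap_comp, inv] at hs'
    simp only [inv] at hs'
    rw [qMap_id] at hs'
    have hG' := alpha_good hX' hG
    refine ⟨.qAbs xs w (qMap (swp w x xs) X'), _, ?_, .abs ?_ f2 hs'⟩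
    · refine alphaAbs_trans hreg hGA (alphaAbs_of_swp hreg hG hX') ?_
      have f1' := alpha_fresh hX' f1
      obtain ⟨v, hv, hv'⟩ := ex_fresh hreg xs [X', qMap (swp w x xs) X'] [x, w]
        (by simp [hG', qGood_map])
      simp only [List.mem_cons, List.not_mem_nil, or_false, forall_eq_or_imp, forall_eq]
        at hv hv'
      rw [alpha_abs]
      exact ⟨rfl, v, hv'.1, hv'.2, hv.1, hv.2, alpha_swp_swp hreg hG' f1' hv.1 hv'.1 n1⟩
    · rintro ⟨⟩; exact n2 rfl

/-! ### Passing to the quotients -/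

theorem tmk_exact (hreg : (Cardinal.mk var).IsRegular)
    {X X' : QTerm var varsort index bindex opsym} (h : tmk X = tmk X') (hG : QGood X) :
    Alpha X X' := by
  have key : ∀ X X' : QTerm var varsort index bindex opsym, Relation.EqvGen Alpha X X' →
      (QGood X ↔ QGood X') ∧ (QGood X → Alpha X X') := by
    intro X X' h
    induction h with
    | rel X X' h => exact ⟨⟨alpha_good h, alpha_good (alpha_symm h)⟩, fun _ => h⟩
    | refl X => exact ⟨Iff.rfl, alpha_refl hreg⟩
    | symm X X' _ ih => exact ⟨ih.1.symm, fun g => alpha_symm (ih.2 (ih.1.2 g))⟩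
    | trans X X' X'' _ _ ih1 ih2 =>
      exact ⟨ih1.1.trans ih2.1, fun g => alpha_trans hreg g (ih1.2 g) (ih2.2 (ih1.1.1 g))⟩
  exact (key X X' (Quot.eqvGen_exact h)).2 hG

theorem alphaAbs_refl (hreg : (Cardinal.mk var).IsRegular)
    {A : QAbs var varsort index bindex opsym} (hG : QGoodAbs A) : AlphaAbs A A := by
  obtain ⟨xs, x, X⟩ := A
  rw [qGood_abs] at hG
  exact alphaAbs_of_swp hreg hG (alpha_refl hreg hG)

theorem amk_exact (hreg : (Cardinal.mk var).IsRegular)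
    {X X' : QAbs var varsort index bindex opsym} (h : amk X = amk X') (hG : QGoodAbs X) :
    AlphaAbs X X' := by
  have key : ∀ X X' : QAbs var varsort index bindex opsym, Relation.EqvGen AlphaAbs X X' →
      (QGoodAbs X ↔ QGoodAbs X') ∧ (QGoodAbs X → AlphaAbs X X') := by
    intro X X' h
    induction h with
    | rel X X' h => exact ⟨⟨alphaAbs_good h, alphaAbs_good (alphaAbs_symm h)⟩, fun _ => h⟩
    | refl X => exact ⟨Iff.rfl, alphaAbs_refl hreg⟩
    | symm X X' _ ih => exact ⟨ih.1.symm, fun g => alphaAbs_symm (ih.2 (ih.1.2 g))⟩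
    | trans X X' X'' _ _ ih1 ih2 =>
      exact ⟨ih1.1.trans ih2.1, fun g => alphaAbs_trans hreg g (ih1.2 g) (ih2.2 (ih1.1.1 g))⟩
  exact (key X X' (Quot.eqvGen_exact h)).2 hG

theorem tmk_trep (X : Term var varsort index bindex opsym) : tmk (trep X) = X := Quot.out_eq X

theorem amk_arep (X : Abstr var varsort index bindex opsym) : amk (arep X) = X := Quot.out_eq X

theorem substRel_ex (hreg : (Cardinal.mk var).IsRegular)
    {X Y : Term var varsort index bindex opsym} (hX : good X) (hY : good Y) (y : var)
    (ys : varsort) : SubstRel X Y y ys (subst X Y y ys) := by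
  have h : ∃ Z, SubstRel X Y y ys Z := by
    obtain ⟨X', Z, a, b⟩ := (qsubst_ex_aux hreg).1 _ hX (trep Y) y ys hY
    exact ⟨tmk Z, X', Z, (Quot.sound a).symm.trans (tmk_trep X), rfl, b⟩
  rw [subst, dif_pos h]
  exact h.choose_spec

theorem substAbsRel_ex (hreg : (Cardinal.mk var).IsRegular)
    {X : Abstr var varsort index bindex opsym} {Y : Term var varsort index bindex opsym}
    (hX : goodAbs X) (hY : good Y) (y : var)
    (ys : varsort) : SubstAbsRel X Y y ys (substAbs X Y y ys) := by
  have h : ∃ Z, SubstAbsRel X Y y ys Z := by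
    obtain ⟨X', Z, a, b⟩ := (qsubst_ex_aux hreg).2 _ hX (trep Y) y ys hY
    exact ⟨amk Z, X', Z, (Quot.sound a).symm.trans (amk_arep X), rfl, b⟩
  rw [substAbs, dif_pos h]
  exact h.choose_spec

theorem subst_eq (hreg : (Cardinal.mk var).IsRegular)
    {Y : Term var varsort index bindex opsym} {qX qZ : QTerm var varsort index bindex opsym}
    (hX : QGood qX) (hY : good Y) {y : var} {ys : varsort}
    (h : QSubst qX (trep Y) y ys qZ) : subst (tmk qX) Y y ys = tmk qZ := by
  have hg : good (tmk qX) := alpha_good (tmk_exact hreg (tmk_trep (tmk qX)).symm hX) hX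
  obtain ⟨qX', qZ', e1, e2, h'⟩ := substRel_ex hreg hg hY y ys
  rw [← e2]
  exact (Quot.sound ((qsubst_unique_aux hreg).1 _ hX _ _ _ _ _ _ _ (tmk_exact hreg e1.symm hX)
    hY (alpha_refl hreg hY) h h')).symm

theorem substAbs_eq (hreg : (Cardinal.mk var).IsRegular)
    {Y : Term var varsort index bindex opsym} {qX qZ : QAbs var varsort index bindex opsym}
    (hX : QGoodAbs qX) (hY : good Y) {y : var} {ys : varsort}
    (h : QSubstAbs qX (trep Y) y ys qZ) : substAbs (amk qX) Y y ys = amk qZ := by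
  have hg : goodAbs (amk qX) := alphaAbs_good (amk_exact hreg (amk_arep (amk qX)).symm hX) hX
  obtain ⟨qX', qZ', e1, e2, h'⟩ := substAbsRel_ex hreg hg hY y ys
  rw [← e2]
  exact (Quot.sound ((qsubst_unique_aux hreg).2 _ hX _ _ _ _ _ _ _ (amk_exact hreg e1.symm hX)
    hY (alpha_refl hreg hY) h h')).symm

/-- simplification rules for substitution. -/
theorem subst_simp (hinf : Cardinal.aleph0 ≤ Cardinal.mk var)
    (hreg : (Cardinal.mk var).IsRegular)
    (X Y : Term var varsort index bindex opsym) (d : opsym)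
    (inp : Input index (Term var varsort index bindex opsym)) (binp : Input bindex (Abstr var varsort index bindex opsym))
    (hX : good X) (hY : good Y) (hinp : liftP good inp) (hbinp : liftP goodAbs binp)
    (hsi : smallDom var inp) (hsb : smallDom var binp)
    (ys xs : varsort) (y x : var) :
    ((xs, x) = (ys, y) → subst (Var xs x) Y y ys = Y) ∧
    ((xs, x) ≠ (ys, y) → subst (Var xs x) Y y ys = Var xs x) ∧
    (subst (Op d inp binp) Y y ys =
      Op d (liftF (fun Z => subst Z Y y ys) inp) (liftF (fun A => substAbs A Y y ys) binp)) ∧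
    ((xs, x) ≠ (ys, y) → fresh xs x Y →
      substAbs (Abs xs x X) Y y ys = Abs xs x (subst X Y y ys)) := by
  refine ⟨?_, ?_, ?_, ?_⟩
  · rintro ⟨⟩
    rw [Var, subst_eq hreg .qVar hY .var_eq, tmk_trep]
  · intro h
    rw [Var, subst_eq hreg .qVar hY (.var_ne h)]
  · have k1 : ∀ i, ∃ o o' : Option (QTerm var varsort index bindex opsym),
        (inp i = none ↔ o = none) ∧ (o = none ↔ o' = none) ∧
        (∀ X qX, inp i = some X → o = some qX → tmk qX = X ∧ QGood qX) ∧
        (∀ X qZ, inp i = some X → o' = some qZ → tmk qZ = subst X Y y ys ∧ QGood qZ) ∧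
        (∀ X Z, o = some X → o' = some Z → QSubst X (trep Y) y ys Z) := by
      intro i
      cases h : inp i with
      | none => exact ⟨none, none, by simp⟩
      | some X =>
        have hg := hinp i X h
        obtain ⟨qX, qZ, e1, e2, hs⟩ := substRel_ex hreg hg hY y ys
        have g1 : QGood qX := alpha_good (tmk_exact hreg ((tmk_trep X).trans e1.symm) hg) hg
        have g2 : QGood qZ := qsubst_good_aux.1 _ _ _ _ _ hs g1 hY
        refine ⟨some qX, some qZ, by simp, by simp, ?_, ?_, ?_⟩
        · rintro _ _ ⟨⟩ ⟨⟩; exact ⟨e1, g1⟩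
        · rintro _ _ ⟨⟩ ⟨⟩; exact ⟨e2, g2⟩
        · rintro _ _ ⟨⟩ ⟨⟩; exact hs
    have k2 : ∀ i, ∃ o o' : Option (QAbs var varsort index bindex opsym),
        (binp i = none ↔ o = none) ∧ (o = none ↔ o' = none) ∧
        (∀ X qX, binp i = some X → o = some qX → amk qX = X ∧ QGoodAbs qX) ∧
        (∀ X qZ, binp i = some X → o' = some qZ → amk qZ = substAbs X Y y ys ∧ QGoodAbs qZ) ∧
        (∀ X Z, o = some X → o' = some Z → QSubstAbs X (trep Y) y ys Z) := by
      intro i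
      cases h : binp i with
      | none => exact ⟨none, none, by simp⟩
      | some X =>
        have hg := hbinp i X h
        obtain ⟨qX, qZ, e1, e2, hs⟩ := substAbsRel_ex hreg hg hY y ys
        have g1 : QGoodAbs qX :=
          alphaAbs_good (amk_exact hreg ((amk_arep X).trans e1.symm) hg) hg
        have g2 : QGoodAbs qZ := qsubst_good_aux.2 _ _ _ _ _ hs g1 hY
        refine ⟨some qX, some qZ, by simp, by simp, ?_, ?_, ?_⟩
        · rintro _ _ ⟨⟩ ⟨⟩; exact ⟨e1, g1⟩
        · rintro _ _ ⟨⟩ ⟨⟩; exact ⟨e2, g2⟩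
        · rintro _ _ ⟨⟩ ⟨⟩; exact hs
    choose o o' a1 a2 a3 a4 a5 using k1
    choose p p' b1 b2 b3 b4 b5 using k2
    have hgood : QGood (QTerm.qOp d o p) := by
      refine .qOp ?_ ?_ ((smallDom_congr a1).1 hsi) ((smallDom_congr b1).1 hsb)
      · intro i qX h
        obtain ⟨X, hX⟩ := opt_ex (a1 i).symm h
        exact (a3 i X qX hX h).2
      · intro i qX h
        obtain ⟨X, hX⟩ := opt_ex (b1 i).symm h
        exact (b3 i X qX hX h).2
    have e1 : tmk (QTerm.qOp d o p) = Op d inp binp := by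
      refine Quot.sound (.qOp ?_ ?_ ?_ ?_)
      · intro i; simp [liftF, a1 i]
      · intro i qX qX' h h'
        simp only [liftF, Option.map_eq_some_iff] at h'
        obtain ⟨X, hX, rfl⟩ := h'
        obtain ⟨t, g⟩ := a3 i X qX hX h
        exact tmk_exact hreg (t.trans (tmk_trep X).symm) g
      · intro i; simp [liftF, b1 i]
      · intro i qX qX' h h'
        simp only [liftF, Option.map_eq_some_iff] at h'
        obtain ⟨X, hX, rfl⟩ := h'
        obtain ⟨t, g⟩ := b3 i X qX hX h
        exact amk_exact hreg (t.trans (amk_arep X).symm) g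
    rw [← e1, subst_eq hreg hgood hY (.op a2 a5 b2 b5)]
    refine Quot.sound (.qOp ?_ ?_ ?_ ?_)
    · intro i; simp [liftF, a1 i, a2 i]
    · intro i qX qX' h h'
      simp only [liftF, Option.map_eq_some_iff] at h'
      obtain ⟨_, ⟨X, hX, rfl⟩, rfl⟩ := h'
      obtain ⟨t, g⟩ := a4 i X qX hX h
      exact tmk_exact hreg (t.trans (tmk_trep _).symm) g
    · intro i; simp [liftF, b1 i, b2 i]
    · intro i qX qX' h h'
      simp only [liftF, Option.map_eq_some_iff] at h'
      obtain ⟨_, ⟨X, hX, rfl⟩, rfl⟩ := h'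
      obtain ⟨t, g⟩ := b4 i X qX hX h
      exact amk_exact hreg (t.trans (amk_arep _).symm) g
  · intro hne hfr
    obtain ⟨qX, qZ, e1, e2, hs⟩ := substRel_ex hreg hX hY y ys
    have al : Alpha (trep X) qX := tmk_exact hreg ((tmk_trep X).trans e1.symm) hX
    have g1 : QGood qX := alpha_good al hX
    have g2 : QGood qZ := qsubst_good_aux.1 _ _ _ _ _ hs g1 hY
    have h1 : Abs xs x X = amk (.qAbs xs x qX) := Quot.sound (alphaAbs_of_swp hreg hX al)
    rw [h1, substAbs_eq hreg (.qAbs g1) hY (.abs hne hfr hs)]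
    exact Quot.sound (alphaAbs_of_swp hreg g2 (tmk_exact hreg (e2.trans (tmk_trep _).symm) g2))

end Binding
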